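/- arXiv:1909.10898 — 3 statements merged into one kernel-verified Lean document; each statement's English description precedes it below -/
import Mathlib

section
/- Let p be a prime, q = p^a a prime power, F_q the finite field with q elements, b ∈ F_q, and k a positive integer with k ≡ 1 (mod p). Then q·P_k(b) = binom(q+k−2, k) − v(b)·binom(q/p + (k−1)/p − 1, (k−1)/p). -/
/-!
Multisets of size `k` containing `0` correspond to multisets of size `k - 1` with the same sum, so
it is enough to count all multisets of size `k` and of size `k - 1` with sum `b`. By Fourier
inversion this requires the sums `∑ ψ (∑ m)` over multisets `m` of size `k`, which are the
coefficients of `∏ a, (1 - ψ a X)⁻¹`. A character `ψ` of order `d` takes each `d`-th root of unity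
equally often, so this product is `(1 - X ^ d)⁻¹ ^ (q / d)`. Every nontrivial character has order
`p`; for `k ≡ 1 (mod p)` these characters contribute nothing to the multisets of size `k`, and they
give the `v(b)` term for those of size `k - 1`.
-/

open Finset PowerSeries

section Equidistribution

theorem orderOf_addChar_pos {A M : Type*} [AddGroup A] [CommMonoid M] [Finite A]
    (ψ : AddChar A M) : 0 < orderOf ψ := by
  refine orderOf_pos_iff.2 (isOfFinOrder_iff_pow_eq_one.2 ⟨Nat.card A, Nat.card_pos, ?_⟩)
  ext x
  rw [AddChar.pow_apply, ← AddChar.map_nsmul_eq_pow, card_nsmul_eq_zero', AddChar.map_zero_eq_one,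
    AddChar.one_apply]

theorem addChar_pow_orderOf_eq_one {A M : Type*} [AddMonoid A] [CommMonoid M]
    (ψ : AddChar A M) (a : A) : ψ a ^ orderOf ψ = 1 := by
  rw [← AddChar.pow_apply, pow_orderOf_eq_one, AddChar.one_apply]

variable {A R : Type*} [AddGroup A] [CommRing R] [IsDomain R]

-- The values of `ψ` form a finite, hence cyclic, group of units.
theorem exists_isPrimitiveRoot_orderOf_addChar [Finite A] (ψ : AddChar A R) :
    ∃ a, IsPrimitiveRoot (ψ a) (orderOf ψ) := by
  set f := ψ.toMonoidHom.toHomUnits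
  have : Finite f.range := Set.finite_range f
  obtain ⟨⟨_, a, rfl⟩, ha⟩ := IsCyclic.exists_generator (α := f.range)
  refine ⟨a.toAdd, IsPrimitiveRoot.iff_orderOf.2 (Nat.dvd_antisymm ?_ ?_)⟩
  · exact orderOf_dvd_of_pow_eq_one (addChar_pow_orderOf_eq_one ψ a.toAdd)
  · refine orderOf_dvd_of_pow_eq_one (AddChar.ext _ _ fun x => ?_)
    have hdvd := orderOf_dvd_of_mem_zpowers (ha ⟨f (.ofAdd x), _, rfl⟩)
    rw [← Subgroup.orderOf_coe, ← Subgroup.orderOf_coe, ← orderOf_units, ← orderOf_units] at hdvd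
    exact orderOf_dvd_iff_pow_eq_one.1 hdvd

variable [Fintype A]

theorem image_addChar_eq_nthRootsFinset [DecidableEq R] (ψ : AddChar A R) :
    univ.image ψ = Polynomial.nthRootsFinset (orderOf ψ) (1 : R) := by
  have hd := orderOf_addChar_pos ψ
  have : NeZero (orderOf ψ) := ⟨hd.ne'⟩
  obtain ⟨a, ha⟩ := exists_isPrimitiveRoot_orderOf_addChar ψ
  ext ζ
  rw [Polynomial.mem_nthRootsFinset hd, mem_image_univ_iff_mem_range]
  constructor
  · rintro ⟨x, rfl⟩
    exact addChar_pow_orderOf_eq_one ψ x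
  · intro hζ
    obtain ⟨i, -, rfl⟩ := ha.eq_pow_of_pow_eq_one hζ
    exact ⟨i • a, AddChar.map_nsmul_eq_pow ψ i a⟩

theorem card_filter_addChar_eq [DecidableEq R] (ψ : AddChar A R) {ζ : R}
    (hζ : ζ ∈ univ.image ψ) : #{a | ψ a = ζ} = Fintype.card A / orderOf ψ := by
  obtain ⟨a, ha⟩ := exists_isPrimitiveRoot_orderOf_addChar ψ
  have hfiber : ∀ ξ ∈ univ.image ψ, #{x | ψ x = ξ} = #{x | ψ x = ζ} := fun ξ hξ =>
    AddMonoidHom.card_fiber_eq_of_mem_range ψ.toAddMonoidHom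
      (mem_image_univ_iff_mem_range.1 hξ) (mem_image_univ_iff_mem_range.1 hζ)
  rw [← card_univ, card_eq_sum_card_image ψ univ, sum_congr rfl hfiber, sum_const,
    image_addChar_eq_nthRootsFinset, ha.card_nthRootsFinset, smul_eq_mul,
    Nat.mul_div_cancel_left _ (orderOf_addChar_pos ψ)]

theorem prod_comp_addChar {M : Type*} [CommMonoid M] (f : R → M) (ψ : AddChar A R) :
    ∏ a, f (ψ a) =
      (∏ ζ ∈ Polynomial.nthRootsFinset (orderOf ψ) (1 : R), f ζ) ^
        (Fintype.card A / orderOf ψ) := by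
  classical
  rw [prod_comp f ψ, ← image_addChar_eq_nthRootsFinset, ← prod_pow]
  exact prod_congr rfl fun ζ hζ => by rw [card_filter_addChar_eq ψ hζ]

end Equidistribution

section GeneratingFunctions

theorem coeff_prod_mk_pow {α R : Type*} [Fintype α] [DecidableEq α] [CommSemiring R]
    (w : α → R) (k : ℕ) :
    coeff k (∏ a, PowerSeries.mk fun n => w a ^ n) =
      ∑ m : Sym α k, ((m : Multiset α).map w).prod := by
  simp_rw [PowerSeries.coeff_prod, coeff_mk]
  refine sum_bij'
    (fun l hl => Sym.mk (Finsupp.toMultiset l)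
      ((Finsupp.card_toMultiset l).trans (mem_finsuppAntidiag'.1 hl).1))
    (fun m _ => Multiset.toFinsupp (m : Multiset α)) (fun _ _ => mem_univ _)
    (fun m _ => mem_finsuppAntidiag'.2 ⟨(Multiset.toFinsupp_sum_eq _).trans m.2, subset_univ _⟩)
    (fun l _ => Finsupp.toMultiset_toFinsupp l)
    (fun m _ => Subtype.ext (Multiset.toFinsupp_toMultiset m.1)) fun l _ => ?_
  rw [Sym.coe_mk, Finsupp.toMultiset_map, Finsupp.prod_toMultiset,
    Finsupp.prod_mapDomain_index pow_zero pow_add, Finsupp.prod_fintype _ _ fun _ => pow_zero _]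

theorem coeff_mk_one_pow {R : Type*} [CommSemiring R] (e k : ℕ) :
    coeff k ((PowerSeries.mk 1 : R⟦X⟧) ^ e) = (e.multichoose k : R) := by
  have h := coeff_prod (fun _ : ℕ => (PowerSeries.mk 1 : R⟦X⟧)) k (range e)
  simpa [card_finsuppAntidiag_nat_eq_multichoose] using h

variable {R : Type*} [CommRing R]

theorem mk_pow_mul_one_sub (r : R) : (PowerSeries.mk fun n => r ^ n) * (1 - C r * X) = 1 := by
  simpa [rescale_mk] using congrArg (rescale r) (mk_one_mul_one_sub_eq_one R)

variable [IsDomain R] {ζ : R} {d : ℕ}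

theorem prod_nthRootsFinset_one_sub_mul (hd : 0 < d) (hζ : IsPrimitiveRoot ζ d) :
    ∏ ξ ∈ Polynomial.nthRootsFinset d (1 : R), (1 - C ξ * X) = (1 - X ^ d : R⟦X⟧) := by
  have : NeZero d := ⟨hd.ne'⟩
  have hCζ : IsPrimitiveRoot (C ζ : R⟦X⟧) d := hζ.map_of_injective C_injective
  have hfactor := hCζ.pow_sub_pow_eq_prod_sub_mul 1 X hd
  rw [one_pow] at hfactor
  rw [hfactor]
  refine prod_nbij C (fun ξ hξ => Polynomial.map_mem_nthRootsFinset_one hξ C)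
    C_injective.injOn (fun η hη => ?_) fun _ _ => rfl
  obtain ⟨i, -, rfl⟩ := hCζ.eq_pow_of_pow_eq_one ((Polynomial.mem_nthRootsFinset hd 1).1 hη)
  have hζi : (ζ ^ i) ^ d = 1 := by rw [pow_right_comm, hζ.pow_eq_one, one_pow]
  exact ⟨ζ ^ i, (Polynomial.mem_nthRootsFinset hd 1).2 hζi, map_pow C ζ i⟩

theorem prod_nthRootsFinset_mk_pow (hd : d ≠ 0) (hζ : IsPrimitiveRoot ζ d) :
    ∏ ξ ∈ Polynomial.nthRootsFinset d (1 : R), PowerSeries.mk (fun n => ξ ^ n) =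
      expand d hd (PowerSeries.mk 1) := by
  have hexpand : expand d hd (PowerSeries.mk 1) * (1 - X ^ d : R⟦X⟧) = 1 := by
    simpa using congrArg (expand d hd) (mk_one_mul_one_sub_eq_one R)
  refine left_inv_eq_right_inv (a := 1 - X ^ d) ?_ ((mul_comm _ _).trans hexpand)
  rw [← prod_nthRootsFinset_one_sub_mul (Nat.pos_of_ne_zero hd) hζ, ← prod_mul_distrib]
  exact prod_eq_one fun ξ _ => mk_pow_mul_one_sub ξ

end GeneratingFunctions

section Counting

theorem card_sym_zero_notMem_add_card_sym {A : Type*} [AddCommMonoid A] [Fintype A] [DecidableEq A]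
    (b : A) (k : ℕ) :
    #{m : Sym A (k + 1) | (0 : A) ∉ (m : Multiset A) ∧ (m : Multiset A).sum = b} +
        #{m : Sym A k | (m : Multiset A).sum = b} =
      #{m : Sym A (k + 1) | (m : Multiset A).sum = b} := by
  have hcons : #{m : Sym A k | (m : Multiset A).sum = b} =
      #{m : Sym A (k + 1) | (m : Multiset A).sum = b ∧ (0 : A) ∈ (m : Multiset A)} := by
    refine card_bij (fun m _ => 0 ::ₛ m) (by simp [Sym.coe_cons]) (by simp) fun m hm => ?_
    obtain ⟨hsum, hzero⟩ := (mem_filter.1 hm).2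
    obtain ⟨t, rfl⟩ := Sym.exists_cons_of_mem hzero
    exact ⟨t, by simpa [Sym.coe_cons] using hsum, rfl⟩
  rw [hcons, ← card_filter_add_card_filter_not (s := {m : Sym A (k + 1) | (m : Multiset A).sum = b})
    (fun m => (0 : A) ∈ (m : Multiset A)), filter_filter, filter_filter, add_comm]
  simp only [and_comm]

theorem addChar_multiset_sum {A M : Type*} [AddCommMonoid A] [CommMonoid M] (ψ : AddChar A M)
    (m : Multiset A) : ψ m.sum = (m.map ψ).prod :=
  map_multiset_sum ψ.toAddMonoidHom m

variable {A : Type*} [AddCommGroup A] [Fintype A] [DecidableEq A]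

theorem sum_sym_addChar_sum {R : Type*} [CommRing R] [IsDomain R] (ψ : AddChar A R) (k : ℕ) :
    ∑ m : Sym A k, ψ (m : Multiset A).sum =
      if orderOf ψ ∣ k then
        ((Fintype.card A / orderOf ψ).multichoose (k / orderOf ψ) : R)
      else 0 := by
  obtain ⟨a, ha⟩ := exists_isPrimitiveRoot_orderOf_addChar ψ
  simp_rw [addChar_multiset_sum]
  rw [← coeff_prod_mk_pow, prod_comp_addChar fun ζ => PowerSeries.mk fun n => ζ ^ n,
    prod_nthRootsFinset_mk_pow (orderOf_addChar_pos ψ).ne' ha, ← map_pow, coeff_expand,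
    coeff_mk_one_pow]

theorem card_mul_card_filter_eq_sum_addChar {ι : Type*} [Fintype ι] (f : ι → A) (b : A) :
    (Fintype.card A : ℂ) * #{i | f i = b} = ∑ ψ : AddChar A ℂ, ψ (-b) * ∑ i, ψ (f i) := by
  simp_rw [mul_sum, ← AddChar.map_add_eq_mul]
  rw [sum_comm]
  simp_rw [AddChar.sum_apply_eq_ite, neg_add_eq_zero, eq_comm (a := b)]
  rw [← sum_filter, sum_const, nsmul_eq_mul, mul_comm]

theorem sum_addChar_erase_one_apply (b : A) :
    ∑ ψ ∈ univ.erase (1 : AddChar A ℂ), ψ b = if b = 0 then (Fintype.card A : ℂ) - 1 else -1 := by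
  rw [← add_left_inj ((1 : AddChar A ℂ) b), sum_erase_add _ _ (mem_univ _),
    AddChar.sum_apply_eq_ite, AddChar.one_apply]
  split_ifs <;> ring

theorem card_mul_card_sym_sum_eq_of_prime {p : ℕ} (hp : p.Prime) (hA : ∀ x : A, p • x = 0)
    (b : A) (k : ℕ) :
    (Fintype.card A : ℤ) * #{m : Sym A k | (m : Multiset A).sum = b} =
      (Fintype.card A).multichoose k +
        (if b = 0 then (Fintype.card A : ℤ) - 1 else -1) *
          if p ∣ k then ((Fintype.card A / p).multichoose (k / p) : ℤ) else 0 := by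
  have horder : ∀ ψ ∈ univ.erase (1 : AddChar A ℂ), orderOf ψ = p := fun ψ hψ =>
    have := Fact.mk hp
    orderOf_eq_prime (AddChar.ext _ _ fun x => by
      rw [AddChar.pow_apply, ← AddChar.map_nsmul_eq_pow, hA, AddChar.map_zero_eq_one,
        AddChar.one_apply]) (ne_of_mem_erase hψ)
  have hsum := card_mul_card_filter_eq_sum_addChar (fun m : Sym A k => (m : Multiset A).sum) b
  simp_rw [sum_sym_addChar_sum] at hsum
  rw [← sum_erase_add _ _ (mem_univ 1), sum_congr rfl fun ψ hψ => by rw [horder ψ hψ],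
    ← sum_mul, sum_addChar_erase_one_apply, add_comm] at hsum
  simp only [AddChar.one_apply, orderOf_one, one_dvd, if_true, Nat.div_one, one_mul,
    neg_eq_zero] at hsum
  exact_mod_cast hsum

end Counting

theorem partitions_finite_field_one_mod_p_general {A : Type*} [AddCommGroup A] [Fintype A]
    [DecidableEq A] {p : ℕ} (hp : p.Prime) (hA : ∀ x : A, p • x = 0) (b : A) {k : ℕ}
    (hk : k ≡ 1 [MOD p]) :
    (Fintype.card A : ℤ) *
        #{m : Sym A k | (0 : A) ∉ (m : Multiset A) ∧ (m : Multiset A).sum = b} =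
      ((Fintype.card A + k - 2).choose k : ℤ) -
        (if b = 0 then (Fintype.card A : ℤ) - 1 else -1) *
          ((Fintype.card A / p + (k - 1) / p - 1).choose ((k - 1) / p) : ℤ) := by
  have hk0 : k ≠ 0 := by
    rintro rfl
    exact hp.ne_one (Nat.dvd_one.1 (Nat.modEq_zero_iff_dvd.1 hk.symm))
  obtain ⟨j, hj⟩ := (Nat.modEq_iff_exists_eq_add (Nat.one_le_iff_ne_zero.2 hk0)).1 hk.symm
  obtain rfl : k = p * j + 1 := hj.trans (add_comm _ _)
  have hndvd : ¬ p ∣ p * j + 1 := by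
    rw [Nat.dvd_add_right (dvd_mul_right p j), Nat.dvd_one]
    exact hp.ne_one
  have hsucc := card_mul_card_sym_sum_eq_of_prime hp hA b (p * j + 1)
  have hpred := card_mul_card_sym_sum_eq_of_prime hp hA b (p * j)
  rw [if_neg hndvd, ← card_sym_zero_notMem_add_card_sym b (p * j)] at hsucc
  rw [if_pos (dvd_mul_right p j), Nat.mul_div_cancel_left _ hp.pos] at hpred
  have hpascal : (Fintype.card A).multichoose (p * j + 1) =
      (Fintype.card A + (p * j + 1) - 2).choose (p * j + 1) +
        (Fintype.card A).multichoose (p * j) := by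
    obtain ⟨n, hn⟩ := Nat.exists_eq_succ_of_ne_zero (Fintype.card_ne_zero (α := A))
    rw [hn, Nat.multichoose_succ_succ, Nat.multichoose_eq n]
    congr 2
    omega
  rw [Nat.add_sub_cancel, Nat.mul_div_cancel_left _ hp.pos, ← Nat.multichoose_eq]
  push_cast [hpascal] at hsucc
  linear_combination hsucc - hpred

/-- **Partitions over finite fields, case `k ≡ 1 (mod p)`.**  For `q = p^a`, `b ∈ F_q`
and `k ≡ 1 (mod p)`, `q·P_k(b) = C(q+k−2, k) − v(b)·C(q/p + (k−1)/p − 1, (k−1)/p)`,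
where `P_k(b)` is the number of multisets of `k` nonzero elements of `F_q` with sum `b`,
and `v(b) = q−1` if `b = 0`, `v(b) = −1` otherwise. -/
theorem partitions_finite_field_one_mod_p (p a : ℕ) (hp : p.Prime) (ha : 0 < a)
    (F : Type*) [Field F] [Fintype F] [DecidableEq F] (hF : Fintype.card F = p ^ a)
    (b : F) (k : ℕ) (hk : 0 < k) (hk1 : k ≡ 1 [MOD p]) :
    (p ^ a : ℤ) * ((Finset.univ.filter fun m : Sym F k =>
        (0 : F) ∉ (m : Multiset F) ∧ (m : Multiset F).sum = b).card : ℤ) =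
      ((p ^ a + k - 2).choose k : ℤ) -
        (if b = 0 then (p ^ a : ℤ) - 1 else -1) *
          ((p ^ a / p + (k - 1) / p - 1).choose ((k - 1) / p) : ℤ) := by
  have := Fact.mk hp
  have := charP_of_card_eq_prime_pow hF
  have hchar : ∀ x : F, p • x = 0 := fun x => by rw [nsmul_eq_mul, CharP.cast_eq_zero, zero_mul]
  simpa [hF] using partitions_finite_field_one_mod_p_general hp hchar b hk1
end

section
/- Let p, k, q be positive integers with p ∣ k and p ∣ q. For 1 ≤ i ≤ k, let p(k,i) be the number of permutations in S_k having exactly i disjoint cycles, each of whose cycle lengths is divisible by p (fixed points counted as cycles of length 1). Then Σ_{i=1}^{k} p(k,i)·q^{i} = k!·binom(q/p + k/p − 1, k/p). (Equivalently, Σ_{τ} q^{c(τ)} = k!·binom(q/p + k/p − 1, k/p), where the sum is over permutations τ ∈ S_k all of whose cycle lengths are divisible by p and c(τ) is the number of cycles of τ.) -/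
/-- The cycle lengths of a permutation of `Fin k`, with fixed points counted
as cycles of length 1. -/
def fullCycleType {k : ℕ} (τ : Equiv.Perm (Fin k)) : Multiset ℕ :=
  τ.cycleType + Multiset.replicate (k - τ.support.card) 1

/-!
Give each permutation of `Fin k` the product of weights `x ℓ` over its cycle lengths `ℓ`, and let
`P k` be the sum. The class with cycle lengths `l` has `k! / z_l` elements, and removing a part `j`
of multiplicity `m` divides `z_l` by `j * m`. Writing `k` as the sum of the `j * m` therefore gives
`k * P k = ∑ i < k, (k! / i!) * x (k - i) * P i`, the coefficient form of the logarithmic derivative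
of `∑ k, P k * t ^ k / k! = exp (∑ j, x j * t ^ j / j)`. For weights `p * y` on the multiples of `p`
and `0` elsewhere, `P (p * n) = (p * n)! * multichoose y n` is the solution because
`n * multichoose y n = y * ∑ i < n, multichoose y i`.
-/

section CentralizerOrder

/-- The order `z_s = ∏ i, i ^ mᵢ * mᵢ!` of the centralizer of a permutation with cycle lengths `s`,
fixed points included, where `mᵢ` is the multiplicity of `i` in `s`. It converts the size of a
conjugacy class into `k! / z_s`. -/
def centralizerOrder (s : Multiset ℕ) : ℕ :=
  s.prod * ∏ i ∈ s.toFinset, (s.count i).factorial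

theorem centralizerOrder_cons (j : ℕ) (s : Multiset ℕ) :
    centralizerOrder (j ::ₘ s) = j * (s.count j + 1) * centralizerOrder s := by
  have hfactorial : ∀ i, ((j ::ₘ s).count i).factorial =
      (if i = j then s.count j + 1 else 1) * (s.count i).factorial := by
    intro i
    rw [Multiset.count_cons]
    split_ifs with h
    · rw [h, Nat.factorial_succ]
    · rw [add_zero, one_mul]
  have hs : ∏ i ∈ insert j s.toFinset, (s.count i).factorial =
      ∏ i ∈ s.toFinset, (s.count i).factorial := by
    refine (Finset.prod_subset (Finset.subset_insert _ _) fun i _ hi => ?_).symm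
    rw [Multiset.count_eq_zero_of_notMem (mt Multiset.mem_toFinset.2 hi), Nat.factorial_zero]
  rw [centralizerOrder, centralizerOrder, Multiset.toFinset_cons, Multiset.prod_cons,
    Finset.prod_congr rfl fun i _ => hfactorial i, Finset.prod_mul_distrib, Finset.prod_ite_eq',
    if_pos (Finset.mem_insert_self _ _), hs]
  ring

theorem centralizerOrder_pos {s : Multiset ℕ} (hs : ∀ i ∈ s, 0 < i) : 0 < centralizerOrder s :=
  Nat.mul_pos (Multiset.prod_pos hs) (Finset.prod_pos fun _ _ => Nat.factorial_pos _)

theorem centralizerOrder_add_replicate_one {s : Multiset ℕ} (hs : 1 ∉ s) (c : ℕ) :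
    centralizerOrder (s + Multiset.replicate c 1) = c.factorial * centralizerOrder s := by
  induction c with
  | zero => simp
  | succ c ih =>
    rw [Multiset.replicate_succ, Multiset.add_cons, centralizerOrder_cons, ih,
      Multiset.count_add, Multiset.count_eq_zero_of_notMem hs, Multiset.count_replicate_self,
      Nat.factorial_succ]
    ring

end CentralizerOrder

section CycleType

variable {k : ℕ}

theorem fullCycleType_eq_parts_partition (τ : Equiv.Perm (Fin k)) :
    fullCycleType τ = τ.partition.parts := by
  rw [fullCycleType, Equiv.Perm.parts_partition, Fintype.card_fin]

theorem isConj_iff_fullCycleType_eq {σ τ : Equiv.Perm (Fin k)} :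
    IsConj σ τ ↔ fullCycleType σ = fullCycleType τ := by
  rw [Equiv.Perm.partition_eq_of_isConj, Nat.Partition.ext_iff, fullCycleType_eq_parts_partition,
    fullCycleType_eq_parts_partition]

theorem nat_card_centralizer_eq_centralizerOrder (τ : Equiv.Perm (Fin k)) :
    Nat.card (Subgroup.centralizer {τ}) = centralizerOrder (fullCycleType τ) := by
  have hone : 1 ∉ τ.cycleType := fun h => (Equiv.Perm.one_lt_of_mem_cycleType h).false
  rw [fullCycleType, centralizerOrder_add_replicate_one hone, Equiv.Perm.nat_card_centralizer,
    Fintype.card_fin, Equiv.Perm.sum_cycleType, mul_assoc, centralizerOrder]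

theorem filter_two_le_parts_add_replicate (l : k.Partition) :
    l.parts.filter (2 ≤ ·) + Multiset.replicate (k - (l.parts.filter (2 ≤ ·)).sum) 1 =
      l.parts := by
  obtain ⟨c, hc⟩ : ∃ c, l.parts.filter (fun i => ¬ 2 ≤ i) = Multiset.replicate c 1 := by
    refine ⟨_, Multiset.eq_replicate_card.2 fun i hi => ?_⟩
    obtain ⟨hi, hlt⟩ := Multiset.mem_filter.1 hi
    have := l.parts_pos hi
    omega
  have hsplit : l.parts.filter (2 ≤ ·) + Multiset.replicate c 1 = l.parts := by
    rw [← hc, Multiset.filter_add_not]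
  have hsum : (l.parts.filter (2 ≤ ·)).sum + c = k := by
    simpa [l.parts_sum] using congrArg Multiset.sum hsplit
  rwa [Nat.sub_eq_of_eq_add' hsum.symm]

theorem exists_fullCycleType_eq_parts (l : k.Partition) :
    ∃ τ : Equiv.Perm (Fin k), fullCycleType τ = l.parts := by
  have hle : (l.parts.filter (2 ≤ ·)).sum ≤ k := by
    have hsum := congrArg Multiset.sum (filter_two_le_parts_add_replicate l)
    rw [Multiset.sum_add, l.parts_sum] at hsum
    exact (Nat.le_add_right _ _).trans_eq hsum
  obtain ⟨τ, hτ⟩ := (Equiv.Perm.exists_with_cycleType_iff (Fin k)).2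
    ⟨by rwa [Fintype.card_fin], fun _ => Multiset.of_mem_filter⟩
  exact ⟨τ, by rw [fullCycleType, ← Equiv.Perm.sum_cycleType, hτ,
    filter_two_le_parts_add_replicate]⟩

/-- The conjugacy class of permutations of `Fin k` whose cycle lengths, fixed points included, are
the parts of `l`. -/
def permsWithParts (l : k.Partition) : Finset (Equiv.Perm (Fin k)) :=
  {τ | fullCycleType τ = l.parts}

theorem card_permsWithParts_mul_centralizerOrder (l : k.Partition) :
    (permsWithParts l).card * centralizerOrder l.parts = k.factorial := by
  obtain ⟨τ, hτ⟩ := exists_fullCycleType_eq_parts l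
  have hclass : Nat.card {σ | IsConj τ σ} = (permsWithParts l).card := by
    simp only [isConj_iff_fullCycleType_eq, hτ, eq_comm (a := l.parts), permsWithParts]
    exact Nat.subtype_card _ (by simp)
  rw [← hclass, ← hτ, ← nat_card_centralizer_eq_centralizerOrder, Equiv.Perm.nat_card_centralizer,
    Equiv.Perm.card_isConj_mul_eq, Fintype.card_fin]

/-- The partition of `k` formed by the cycle lengths of a permutation of `Fin k`. It differs from
`Equiv.Perm.partition`, a partition of `Fintype.card (Fin k)`, only in its type. -/
def fullCyclePartition (τ : Equiv.Perm (Fin k)) : k.Partition where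
  parts := fullCycleType τ
  parts_pos hi := τ.partition.parts_pos (fullCycleType_eq_parts_partition τ ▸ hi)
  parts_sum := by
    rw [fullCycleType_eq_parts_partition, τ.partition.parts_sum, Fintype.card_fin]

theorem sum_fullCycleType_eq_sum_partition {M : Type*} [AddCommMonoid M] (f : Multiset ℕ → M) :
    ∑ τ : Equiv.Perm (Fin k), f (fullCycleType τ) =
      ∑ l : k.Partition, (permsWithParts l).card • f l.parts := by
  rw [← Finset.sum_fiberwise Finset.univ fullCyclePartition]
  refine Finset.sum_congr rfl fun l _ => ?_
  have hfiber : Finset.univ.filter (fullCyclePartition · = l) = permsWithParts l :=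
    Finset.filter_congr fun τ _ => Nat.Partition.ext_iff
  rw [hfiber]
  exact Finset.sum_eq_card_nsmul fun τ hτ => congrArg f (Finset.mem_filter.1 hτ).2

end CycleType

section CycleIndex

variable {k : ℕ}

theorem count_mul_card_permsWithParts {j : ℕ} (hjk : j ≤ k) {l : k.Partition}
    {m : (k - j).Partition} (hlm : l.parts = j ::ₘ m.parts) :
    j * l.parts.count j * (permsWithParts l).card =
      k.descFactorial j * (permsWithParts m).card := by
  refine Nat.eq_of_mul_eq_mul_right (centralizerOrder_pos fun _ => m.parts_pos) ?_
  calc j * l.parts.count j * (permsWithParts l).card * centralizerOrder m.parts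
      = (permsWithParts l).card * centralizerOrder l.parts := by
        rw [hlm, centralizerOrder_cons, Multiset.count_cons_self]
        ring
    _ = k.descFactorial j * (k - j).factorial := by
        rw [card_permsWithParts_mul_centralizerOrder, mul_comm, Nat.factorial_mul_descFactorial hjk]
    _ = k.descFactorial j * (permsWithParts m).card * centralizerOrder m.parts := by
        rw [mul_assoc, card_permsWithParts_mul_centralizerOrder]

theorem sum_range_mul_count_parts (l : k.Partition) :
    ∑ i ∈ Finset.range k, (k - i) * l.parts.count (k - i) = k := by
  have hparts : l.parts.toFinset ⊆ Finset.Icc 1 k := fun i hi =>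
    have hi := Multiset.mem_toFinset.1 hi
    Finset.mem_Icc.2 ⟨l.parts_pos hi, Nat.Partition.le_of_mem_parts hi⟩
  calc ∑ i ∈ Finset.range k, (k - i) * l.parts.count (k - i)
      = ∑ j ∈ Finset.Icc 1 k, j * l.parts.count j := by
        refine Finset.sum_nbij' (k - ·) (k - ·) ?_ ?_ ?_ ?_ fun _ _ => rfl <;>
          intro i hi <;> simp only [Finset.mem_range, Finset.mem_Icc] at hi ⊢ <;> omega
    _ = l.parts.sum := by
        rw [Finset.sum_multiset_count_of_subset _ _ hparts]
        simp only [smul_eq_mul, mul_comm]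
    _ = k := l.parts_sum

variable {R : Type*} [CommSemiring R] (x : ℕ → R)

/-- The cycle index of the symmetric group `S_k`, multiplied by `k!` to avoid denominators: each
permutation contributes the product of the weights `x ℓ` over its cycle lengths `ℓ`. -/
def cycleIndexSum (k : ℕ) : R :=
  ∑ τ : Equiv.Perm (Fin k), ((fullCycleType τ).map x).prod

theorem sum_partition_count_mul_eq {j : ℕ} (hj : 1 ≤ j) (hjk : j ≤ k) :
    ∑ l : k.Partition, ((j * l.parts.count j * (permsWithParts l).card : ℕ) : R) *
        (l.parts.map x).prod =
      k.descFactorial j * x j * cycleIndexSum x (k - j) := by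
  let e := Nat.Partition.partitionWithPartEquiv hj hjk
  have hparts (m : (k - j).Partition) : (e.symm m).1.parts = j ::ₘ m.parts :=
    Nat.Partition.partitionWithPartEquiv_symm_apply_parts hj hjk m
  let term (l : k.Partition) : R :=
    ((j * l.parts.count j * (permsWithParts l).card : ℕ) : R) * (l.parts.map x).prod
  have hzero (l : k.Partition) (hl : j ∉ l.parts) : term l = 0 := by
    simp [term, Multiset.count_eq_zero_of_notMem hl]
  calc ∑ l, term l
      = ∑ l : k.Partition with j ∈ l.parts, term l :=
        (Finset.sum_filter_of_ne fun l _ hl => not_imp_comm.1 (hzero l) hl).symm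
    _ = ∑ l : {l : k.Partition // j ∈ l.parts}, term l :=
        Finset.sum_subtype _ (by simp) _
    _ = ∑ m : (k - j).Partition, term (e.symm m) := (e.symm.sum_comp fun l => term l).symm
    _ = ∑ m : (k - j).Partition,
          k.descFactorial j * x j * ((permsWithParts m).card • (m.parts.map x).prod) := by
        refine Finset.sum_congr rfl fun m _ => ?_
        simp only [term]
        rw [count_mul_card_permsWithParts hjk (hparts m), hparts, Multiset.map_cons,
          Multiset.prod_cons, nsmul_eq_mul, Nat.cast_mul]
        ring
    _ = k.descFactorial j * x j * cycleIndexSum x (k - j) := by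
        rw [← Finset.mul_sum, cycleIndexSum,
          sum_fullCycleType_eq_sum_partition fun s => (s.map x).prod]

theorem mul_cycleIndexSum (k : ℕ) :
    k * cycleIndexSum x k =
      ∑ i ∈ Finset.range k, k.descFactorial (k - i) * x (k - i) * cycleIndexSum x i := by
  calc (k : R) * cycleIndexSum x k
      = ∑ l : k.Partition, ∑ i ∈ Finset.range k,
          (((k - i) * l.parts.count (k - i) * (permsWithParts l).card : ℕ) : R) *
            (l.parts.map x).prod := by
        rw [cycleIndexSum, sum_fullCycleType_eq_sum_partition fun s => (s.map x).prod,
          Finset.mul_sum]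
        refine Finset.sum_congr rfl fun l _ => ?_
        rw [← Finset.sum_mul, ← Nat.cast_sum, ← Finset.sum_mul, sum_range_mul_count_parts,
          nsmul_eq_mul, Nat.cast_mul, mul_assoc]
    _ = ∑ i ∈ Finset.range k, k.descFactorial (k - i) * x (k - i) * cycleIndexSum x i := by
        rw [Finset.sum_comm]
        refine Finset.sum_congr rfl fun i hi => ?_
        have hik := Finset.mem_range.1 hi
        rw [sum_partition_count_mul_eq x (by omega) (Nat.sub_le k i), Nat.sub_sub_self hik.le]

theorem prod_map_ite_dvd (p : ℕ) (q : R) (s : Multiset ℕ) :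
    (s.map fun i => if p ∣ i then q else 0).prod =
      if ∀ i ∈ s, p ∣ i then q ^ s.card else 0 := by
  induction s using Multiset.induction_on with
  | empty => simp
  | cons i s ih =>
    simp only [Multiset.map_cons, Multiset.prod_cons, ih, Multiset.forall_mem_cons,
      Multiset.card_cons, pow_succ', ite_and, ite_mul, mul_ite, zero_mul, mul_zero]
    split_ifs <;> rfl

theorem sum_range_mul_filter_dvd {M : Type*} [AddCommMonoid M] {p : ℕ} (hp : 0 < p) (n : ℕ)
    (f : ℕ → M) :
    ∑ i ∈ Finset.range (p * n) with p ∣ i, f i = ∑ i ∈ Finset.range n, f (p * i) := by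
  symm
  refine Finset.sum_nbij (p * ·) ?_ (mul_right_injective₀ hp.ne').injOn ?_ fun _ _ => rfl
  · intro i hi
    simpa [hp] using hi
  · rintro _ hi
    obtain ⟨hi, i, rfl⟩ := Finset.mem_filter.1 hi
    exact ⟨i, by simpa [hp] using hi, rfl⟩

theorem mul_cycleIndexSum_ite_dvd_mul {p : ℕ} (hp : 0 < p) (n : ℕ) (q : R) :
    ((p * n : ℕ) : R) * cycleIndexSum (fun i => if p ∣ i then q else 0) (p * n) =
      ∑ i ∈ Finset.range n, (p * n).descFactorial (p * n - p * i) * q *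
        cycleIndexSum (fun i => if p ∣ i then q else 0) (p * i) := by
  rw [mul_cycleIndexSum, ← sum_range_mul_filter_dvd hp n fun i =>
    (p * n).descFactorial (p * n - i) * q * cycleIndexSum (fun i => if p ∣ i then q else 0) i,
    Finset.sum_filter]
  refine Finset.sum_congr rfl fun i hi => ?_
  have hdvd : p ∣ p * n - i ↔ p ∣ i :=
    Nat.dvd_sub_iff_right (Finset.mem_range.1 hi).le (dvd_mul_right p n)
  simp only [hdvd, mul_ite, ite_mul, mul_zero, zero_mul]

theorem cycleIndexSum_ite_dvd (p k : ℕ) (q : R) :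
    cycleIndexSum (fun i => if p ∣ i then q else 0) k =
      ∑ τ : Equiv.Perm (Fin k) with ∀ ℓ ∈ fullCycleType τ, p ∣ ℓ, q ^ (fullCycleType τ).card := by
  simp only [cycleIndexSum, prod_map_ite_dvd, Finset.sum_filter]

end CycleIndex

section Multichoose

attribute [local instance] BinomialRing.toIsAddTorsionFree

theorem succ_nsmul_multichoose_succ {R : Type*} [Semiring R] [BinomialRing R] (x : R) (n : ℕ) :
    (n + 1) • Ring.multichoose x (n + 1) = Ring.multichoose x n * (x + n) := by
  rw [← nsmul_right_inj n.factorial_ne_zero, ← mul_nsmul, ← Nat.factorial_succ,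
    Ring.factorial_nsmul_multichoose_eq_ascPochhammer, ← smul_mul_assoc,
    Ring.factorial_nsmul_multichoose_eq_ascPochhammer, Polynomial.ascPochhammer_smeval_eq_eval,
    Polynomial.ascPochhammer_smeval_eq_eval, ascPochhammer_succ_eval]

theorem nsmul_multichoose_eq_sum_mul {R : Type*} [Semiring R] [BinomialRing R] (x : R) (n : ℕ) :
    n • Ring.multichoose x n = (∑ i ∈ Finset.range n, Ring.multichoose x i) * x := by
  induction n with
  | zero => simp
  | succ n ih =>
    rw [succ_nsmul_multichoose_succ, mul_add, ← nsmul_eq_mul', ih, Finset.sum_range_succ, add_mul,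
      add_comm]

variable {R : Type*} [CommSemiring R] [BinomialRing R] {p : ℕ}

theorem cycleIndexSum_ite_dvd_mul (hp : 0 < p) (n : ℕ) (x : R) :
    cycleIndexSum (fun i => if p ∣ i then p * x else 0) (p * n) =
      (p * n).factorial * Ring.multichoose x n := by
  induction n using Nat.strong_induction_on with
  | _ n ih =>
    rcases Nat.eq_zero_or_pos n with rfl | hn
    · simp [cycleIndexSum, fullCycleType]
    rw [← nsmul_right_inj (Nat.mul_pos hp hn).ne', nsmul_eq_mul]
    calc ((p * n : ℕ) : R) * cycleIndexSum (fun i => if p ∣ i then p * x else 0) (p * n)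
        = ∑ i ∈ Finset.range n, (p * n).factorial * (p * x) * Ring.multichoose x i := by
          rw [mul_cycleIndexSum_ite_dvd_mul hp]
          refine Finset.sum_congr rfl fun i hi => ?_
          have hfactorial := Nat.factorial_mul_descFactorial (Nat.sub_le (p * n) (p * i))
          rw [Nat.sub_sub_self (Nat.mul_le_mul_left p (Finset.mem_range.1 hi).le)] at hfactorial
          rw [ih i (Finset.mem_range.1 hi), ← hfactorial, Nat.cast_mul]
          ring
      _ = (p * n) • ((p * n).factorial * Ring.multichoose x n) := by
          rw [← Finset.mul_sum, ← mul_assoc, mul_assoc, mul_comm x, ← nsmul_multichoose_eq_sum_mul,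
            nsmul_eq_mul, nsmul_eq_mul, Nat.cast_mul]
          ring

theorem perm_cycle_divisible_count_general (hp : 0 < p) (n : ℕ) (x : R) :
    ∑ τ : Equiv.Perm (Fin (p * n)) with ∀ ℓ ∈ fullCycleType τ, p ∣ ℓ,
        (p * x) ^ (fullCycleType τ).card =
      (p * n).factorial * Ring.multichoose x n := by
  rw [← cycleIndexSum_ite_dvd, cycleIndexSum_ite_dvd_mul hp]

end Multichoose

/-- **Lemma of Li–Wan.**  If `p ∣ k` and `p ∣ q`, then
`Σ_τ q^{c(τ)} = k!·C(q/p + k/p − 1, k/p)`, the sum being over permutations `τ ∈ S_k` all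
of whose cycle lengths are divisible by `p`, where `c(τ)` is the number of cycles of `τ`
(fixed points counted as cycles of length 1). -/
theorem perm_cycle_divisible_count (p k q : ℕ) (hp : 0 < p) (hk : 0 < k) (hq : 0 < q)
    (hpk : p ∣ k) (hpq : p ∣ q) :
    ∑ τ ∈ Finset.univ.filter
        (fun τ : Equiv.Perm (Fin k) => ∀ ℓ ∈ fullCycleType τ, p ∣ ℓ),
      q ^ (fullCycleType τ).card =
      k.factorial * (q / p + k / p - 1).choose (k / p) := by
  obtain ⟨n, rfl⟩ := hpk
  obtain ⟨m, rfl⟩ := hpq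
  rw [Nat.mul_div_cancel_left m hp, Nat.mul_div_cancel_left n hp, ← Nat.multichoose_eq]
  exact perm_cycle_divisible_count_general hp n m
end

section
/- Let n ≥ 1 and q ≥ 2 be integers, and let F be the (finite) set of all multisets of elements of ℤ/nℤ whose elements sum to 0 and in which every element has multiplicity strictly less than q. Then n·|F| = Σ_{e ∣ n, gcd(e,q)=1} φ(e)·q^{n/e}, where the sum is over positive divisors e of n that are coprime to q and φ is Euler's totient function. -/
/-! The multisets can be counted over any finite abelian group `G`. Recording multiplicities turns
them into functions `f : G → {0, …, q - 1}`, and orthogonality of characters turns `|G|` times their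
number into the sum over `ψ` of `∏ a, (1 + ψ a + ⋯ + ψ a ^ (q - 1))`. Over a character of order `d`
the values of `ψ` run `|G| / d` times through the group `μ_d` of `d`-th roots of unity, so it
remains to evaluate `∏ ζ ∈ μ_d, (1 + ζ + ⋯ + ζ ^ (q - 1))`. If `q` is coprime to `d`, then
`ζ ↦ ζ ^ q` permutes the `ζ ≠ 1`, their factors `(ζ ^ q - 1) / (ζ - 1)` cancel, and the product is
the factor `q` of `ζ = 1`. Otherwise some `ζ ≠ 1` of prime order dividing `q` contributes a zero
factor. As `G` is isomorphic to its dual, the sum over characters is a sum over elements of `G`, and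
`ℤ/nℤ` has `φ(e)` elements of each order `e ∣ n`. -/

open Finset

section GeomSum

variable {G R : Type*} [Group G] [Fintype G] [CommRing R] [IsDomain R]

theorem prod_geom_sum_of_coprime {f : G →* R} (hf : Function.Injective f) {q : ℕ}
    (hq : (Nat.card G).Coprime q) : ∏ g, ∑ j ∈ range q, f g ^ j = q := by
  classical
  have prod_sub_one_ne_zero : ∏ g ∈ univ.erase 1, (f g - 1) ≠ 0 := prod_ne_zero_iff.2 fun g hg =>
    sub_ne_zero.2 <| (map_ne_one_iff f hf).2 (ne_of_mem_erase hg)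
  have prod_pow_sub_one : ∏ g ∈ univ.erase 1, (f g ^ q - 1) = ∏ g ∈ univ.erase 1, (f g - 1) :=
    prod_equiv (powCoprime hq)
      (fun g => by simpa using ((powCoprime hq).injective.ne_iff' (powCoprime_one hq)).symm)
      fun g _ => by simp
  have prod_erase_one : ∏ g ∈ univ.erase 1, ∑ j ∈ range q, f g ^ j = 1 :=
    mul_right_cancel₀ prod_sub_one_ne_zero <| by
      simp only [← prod_mul_distrib, geom_sum_mul, prod_pow_sub_one, one_mul]
  rw [← mul_prod_erase univ _ (mem_univ 1), prod_erase_one]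
  simp

theorem prod_geom_sum_eq_zero_of_not_coprime {f : G →* R} (hf : Function.Injective f) {q : ℕ}
    (hq : ¬(Nat.card G).Coprime q) : ∏ g, ∑ j ∈ range q, f g ^ j = 0 := by
  obtain ⟨p, hp, hpG, hpq⟩ := Nat.Prime.not_coprime_iff_dvd.1 hq
  have := Fact.mk hp
  obtain ⟨g, hg⟩ := exists_prime_orderOf_dvd_card' p hpG
  have map_ne_one : f g ≠ 1 :=
    (map_ne_one_iff f hf).2 fun h => hp.ne_one <| by rw [← hg, h, orderOf_one]
  have map_pow_eq_one : f g ^ q = 1 := by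
    rw [← map_pow, orderOf_dvd_iff_pow_eq_one.1 (hg ▸ hpq), map_one]
  refine prod_eq_zero (mem_univ g) <| (mul_eq_zero.1 ?_).resolve_right (sub_ne_zero.2 map_ne_one)
  rw [geom_sum_mul, map_pow_eq_one, sub_self]

end GeomSum

theorem prod_comp_eq_prod_pow_card_ker {G H M : Type*} [Group G] [Fintype G] [Group H] [Fintype H]
    [CommMonoid M] {f : G →* H} (hf : Function.Surjective f) (F : H → M) :
    ∏ g, F (f g) = (∏ h, F h) ^ Nat.card f.ker := by
  classical
  have card_fiber (h : H) : #{g | f g = h} = Nat.card f.ker := by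
    rw [MonoidHom.card_fiber_eq_of_mem_range f (hf h) (hf 1), ← Fintype.card_subtype,
      ← Nat.card_eq_fintype_card]
    rfl
  simp only [← prod_fiberwise' univ f F, prod_const, card_fiber, prod_pow]

theorem orderOf_eq_exponent_range {G H : Type*} [Group G] [CommGroup H] (f : G →* H) :
    orderOf f = Monoid.exponent f.range := by
  refine Nat.dvd_right_iff_eq.1 fun k => ?_
  rw [orderOf_dvd_iff_pow_eq_one, Monoid.exponent_dvd_iff_forall_pow_eq_one]
  simp [DFunLike.ext_iff, Subtype.ext_iff]

theorem orderOf_eq_card_range {G R : Type*} [Group G] [Finite G] [CommRing R] [IsDomain R]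
    (χ : G →* Rˣ) : orderOf χ = Nat.card χ.range := by
  have : Finite χ.range := (Set.finite_range χ).to_subtype
  have : IsCyclic χ.range := isCyclic_subgroup_units χ.range
  rw [orderOf_eq_exponent_range, IsCyclic.exponent_eq_card]

theorem prod_geom_sum_monoidHom {G R : Type*} [Group G] [Fintype G] [CommRing R] [IsDomain R]
    (χ : G →* Rˣ) (q : ℕ) :
    ∏ g, ∑ j ∈ range q, (χ g : R) ^ j =
      if (orderOf χ).Coprime q then (q : R) ^ (Nat.card G / orderOf χ) else 0 := by
  classical
  let ι : χ.range →* R := (Units.coeHom R).comp χ.range.subtype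
  have ι_injective : Function.Injective ι := Units.val_injective.comp Subtype.val_injective
  have card_ker : Nat.card χ.ker = Nat.card G / orderOf χ := by
    rw [← χ.ker.card_mul_index, Subgroup.index_ker, ← orderOf_eq_card_range,
      Nat.mul_div_cancel _ (orderOf_pos χ)]
  have prod_eq_pow : ∏ g, ∑ j ∈ range q, (χ g : R) ^ j =
      (∏ u, ∑ j ∈ range q, ι u ^ j) ^ Nat.card χ.ker := by
    rw [← χ.ker_rangeRestrict]
    exact prod_comp_eq_prod_pow_card_ker χ.rangeRestrict_surjective fun u => ∑ j ∈ range q, ι u ^ j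
  rw [prod_eq_pow]
  split_ifs with hq <;> rw [orderOf_eq_card_range] at hq
  · rw [prod_geom_sum_of_coprime ι_injective hq, card_ker]
  · rw [prod_geom_sum_eq_zero_of_not_coprime ι_injective hq, zero_pow Nat.card_pos.ne']

theorem prod_geom_sum_addChar {G R : Type*} [AddGroup G] [Fintype G] [CommRing R] [IsDomain R]
    (ψ : AddChar G R) (q : ℕ) :
    ∏ g, ∑ j ∈ range q, ψ g ^ j =
      if (orderOf ψ).Coprime q then (q : R) ^ (Nat.card G / orderOf ψ) else 0 := by
  have h := prod_geom_sum_monoidHom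
    ((AddChar.toMonoidHomMulEquiv.trans MonoidHom.toHomUnitsMulEquiv) ψ) q
  rw [MulEquiv.orderOf_eq, Nat.card_congr Multiplicative.toAdd] at h
  exact (Fintype.prod_equiv Multiplicative.ofAdd _ _ fun _ => rfl).trans h

theorem nonempty_addChar_mulEquiv_multiplicative (G : Type*) [AddCommGroup G] [Finite G] :
    Nonempty (AddChar G ℂ ≃* Multiplicative G) :=
  (CommGroup.monoidHom_mulEquiv_of_hasEnoughRootsOfUnity (Multiplicative G) ℂ).map
    (AddChar.toMonoidHomMulEquiv.trans MonoidHom.toHomUnitsMulEquiv).trans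

theorem sum_filter_addChar_orderOf {G M : Type*} [AddCommGroup G] [Fintype G] [AddCommMonoid M]
    (p : ℕ → Prop) [DecidablePred p] (F : ℕ → M) :
    ∑ ψ : AddChar G ℂ with p (orderOf ψ), F (orderOf ψ) =
      ∑ g : G with p (addOrderOf g), F (addOrderOf g) := by
  obtain ⟨e⟩ := nonempty_addChar_mulEquiv_multiplicative G
  have addOrderOf_e (ψ : AddChar G ℂ) : addOrderOf (e ψ).toAdd = orderOf ψ :=
    (orderOf_ofAdd_eq_addOrderOf _).symm.trans (e.orderOf_eq ψ)
  exact sum_equiv (e.toEquiv.trans Multiplicative.toAdd) (by simp [addOrderOf_e])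
    (by simp [addOrderOf_e])

theorem sum_filter_addOrderOf {G M : Type*} [AddGroup G] [IsAddCyclic G] [Fintype G]
    [AddCommMonoid M] (p : ℕ → Prop) [DecidablePred p] (F : ℕ → M) :
    ∑ g : G with p (addOrderOf g), F (addOrderOf g) =
      ∑ d ∈ (Nat.card G).divisors with p d, d.totient • F d := by
  have maps_to (g : G) (_ : g ∈ univ) : addOrderOf g ∈ (Nat.card G).divisors :=
    Nat.mem_divisors.2 ⟨addOrderOf_dvd_natCard g, Nat.card_pos.ne'⟩
  rw [sum_filter, sum_filter,
    ← sum_fiberwise_of_maps_to' maps_to fun d => if p d then F d else 0]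
  refine sum_congr rfl fun d hd => ?_
  have hdG : d ∣ Fintype.card G := by simpa using Nat.dvd_of_mem_divisors hd
  rw [sum_const, IsAddCyclic.card_addOrderOf_eq_totient hdG, smul_ite, smul_zero]

theorem card_mul_card_filter_sum_nsmul_eq {G ι : Type*} [AddCommGroup G] [Finite G] [DecidableEq G]
    [Fintype ι] [DecidableEq ι] (T : ι → Finset ℕ) (x : ι → G) (s : G) :
    (Nat.card G : ℂ) * #{f ∈ Fintype.piFinset T | ∑ i, f i • x i = s} =
      ∑ ψ : AddChar G ℂ, ψ (-s) * ∏ i, ∑ j ∈ T i, ψ (x i) ^ j := by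
  cases nonempty_fintype G
  have map_sum_sub (ψ : AddChar G ℂ) (f : ι → ℕ) :
      ψ (∑ i, f i • x i - s) = ψ (-s) * ∏ i, ψ (x i) ^ f i := by
    simp_rw [sub_eq_neg_add, ψ.map_add_eq_mul, ← ψ.map_nsmul_eq_pow]
    exact congrArg _ (map_prod ψ.toMonoidHom (fun i => Multiplicative.ofAdd (f i • x i)) univ)
  calc (Nat.card G : ℂ) * #{f ∈ Fintype.piFinset T | ∑ i, f i • x i = s}
      = ∑ f ∈ Fintype.piFinset T, ∑ ψ : AddChar G ℂ, ψ (∑ i, f i • x i - s) := by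
        simp_rw [AddChar.sum_apply_eq_ite, sub_eq_zero, ← sum_filter, sum_const, nsmul_eq_mul,
          Nat.card_eq_fintype_card, mul_comm]
    _ = ∑ ψ : AddChar G ℂ, ψ (-s) * ∑ f ∈ Fintype.piFinset T, ∏ i, ψ (x i) ^ f i := by
        rw [sum_comm]
        simp_rw [map_sum_sub, mul_sum]
    _ = ∑ ψ : AddChar G ℂ, ψ (-s) * ∏ i, ∑ j ∈ T i, ψ (x i) ^ j := by
        simp_rw [prod_univ_sum]

theorem ncard_multiset_sum_eq_count_mem {G : Type*} [AddCommMonoid G] [Fintype G] [DecidableEq G]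
    (T : G → Finset ℕ) (s : G) :
    Set.ncard {m : Multiset G | m.sum = s ∧ ∀ a, m.count a ∈ T a} =
      #{f ∈ Fintype.piFinset T | ∑ a, f a • a = s} := by
  let e : Multiset G ≃ (G → ℕ) := Multiset.toFinsupp.toEquiv.trans Finsupp.equivFunOnFinite
  have sum_eq (m : Multiset G) : m.sum = ∑ a, e m a • a :=
    sum_multiset_count_of_subset m univ (subset_univ _)
  rw [← Set.ncard_coe_finset, ← Set.ncard_preimage_of_injective_subset_range e.injective (by simp)]
  congr 1
  ext m
  simp [sum_eq, and_comm, e]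

theorem card_mul_ncard_multiset_sum_eq_count_lt {G : Type*} [AddCommGroup G] [Finite G]
    [DecidableEq G] (q : ℕ) (s : G) :
    (Nat.card G : ℂ) * Set.ncard {m : Multiset G | m.sum = s ∧ ∀ a, m.count a < q} =
      ∑ ψ : AddChar G ℂ with (orderOf ψ).Coprime q, ψ (-s) * q ^ (Nat.card G / orderOf ψ) := by
  cases nonempty_fintype G
  have h := card_mul_card_filter_sum_nsmul_eq (fun _ : G => range q) id s
  simp only [id, ← ncard_multiset_sum_eq_count_mem, mem_range] at h
  simp only [h, prod_geom_sum_addChar, mul_ite, mul_zero, sum_filter]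

theorem zero_sum_multisets_count_general {G : Type*} [AddCommGroup G] [Fintype G] [DecidableEq G]
    (q : ℕ) :
    Nat.card G * Set.ncard {m : Multiset G | m.sum = 0 ∧ ∀ a, m.count a < q} =
      ∑ g : G with (addOrderOf g).Coprime q, q ^ (Nat.card G / addOrderOf g) := by
  have h := card_mul_ncard_multiset_sum_eq_count_lt q (0 : G)
  simp only [neg_zero, AddChar.map_zero_eq_one, one_mul] at h
  rw [sum_filter_addChar_orderOf (·.Coprime q) fun d => (q : ℂ) ^ (Nat.card G / d)] at h
  exact_mod_cast h

/-- **Counting zero-sum multisets with bounded multiplicities.**  For `n ≥ 1` and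
`q ≥ 2`, `n` times the number of multisets over `ℤ/nℤ` with zero sum and every
multiplicity strictly less than `q` equals `Σ_{e ∣ n, gcd(e,q)=1} φ(e)·q^{n/e}`. -/
theorem zero_sum_multisets_count (n q : ℕ) [NeZero n] (hn : 1 ≤ n) (hq : 2 ≤ q) :
    n * Set.ncard {m : Multiset (ZMod n) | m.sum = 0 ∧ ∀ a : ZMod n, m.count a < q} =
      ∑ e ∈ n.divisors.filter (fun e => Nat.gcd e q = 1),
        Nat.totient e * q ^ (n / e) := by
  simpa [Nat.coprime_iff_gcd_eq_one] using (zero_sum_multisets_count_general (G := ZMod n) q).trans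
    (sum_filter_addOrderOf (·.Coprime q) fun d => q ^ (Nat.card (ZMod n) / d))
end
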